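/- Let λ > 0, let ρ and μ be probability measures on ℝⁿ = ℝᵐ × ℝᵈ, and let ψ : ℝⁿ → ℝ be bounded and twice continuously differentiable with ‖∇ψ(z)‖ ≤ L and ‖∇²ψ(z)‖ ≤ M for all z. Define J(ε) = ∫ εψ dρ + ∫ (εψ)^c dμ. Then J is differentiable at ε = 0 with J'(0) = ∫ ψ dρ − ∫ ψ dμ; i.e., the first variation of the dual objective at the zero potential is the (signed) measure ρ − μ. -/

import Mathlib

/-!
Testing the infimum at the base point gives `(εψ)^c ≤ -εψ`. Conversely, `ψ` is Lipschitz and the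
cost grows at least quadratically away from the diagonal, so completing the square in the distance
gives `(εψ)^c ≥ -εψ - Cε²` with `C` independent of the base point. The remainder `(εψ)^c + εψ` is
therefore `O(ε²)` uniformly, and it stays so after integration against a finite measure. It is
measurable because an infimum of upper semicontinuous functions is upper semicontinuous.
-/

open scoped RealInnerProductSpace
open MeasureTheory

noncomputable section

/-- The product space `ℝᵐ × ℝᵈ` whose points are written `z = (y, x)`. -/
abbrev Zsp (m d : ℕ) := EuclideanSpace ℝ (Fin m) × EuclideanSpace ℝ (Fin d)

/-- Weighted quadratic cost `c_λ(z,z') = (1/2)(λ‖y−y'‖² + ‖x−x'‖²)`. -/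
noncomputable def cost (lam : ℝ) {m d : ℕ} (z z' : Zsp m d) : ℝ :=
  (lam * ‖z.1 - z'.1‖ ^ 2 + ‖z.2 - z'.2‖ ^ 2) / 2

/-- The `c`-transform `φ^c(z') = inf_z (c_λ(z,z') − φ(z))`. -/
noncomputable def ctrans (lam : ℝ) {m d : ℕ} (φ : Zsp m d → ℝ) (z' : Zsp m d) : ℝ :=
  ⨅ z : Zsp m d, (cost lam z z' - φ z)

/-- Partial gradient in the `y` variable. -/
noncomputable def gradY {m d : ℕ} (F : Zsp m d → ℝ) (z : Zsp m d) :
    EuclideanSpace ℝ (Fin m) :=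
  gradient (fun y => F (y, z.2)) z.1

/-- Partial gradient in the `x` variable. -/
noncomputable def gradX {m d : ℕ} (F : Zsp m d → ℝ) (z : Zsp m d) :
    EuclideanSpace ℝ (Fin d) :=
  gradient (fun x => F (z.1, x)) z.2

/-- Rescaled gradient `∇_λF(z) = (∇_yF(z)/λ, ∇_xF(z))`. -/
noncomputable def gradLam (lam : ℝ) {m d : ℕ} (F : Zsp m d → ℝ) (z : Zsp m d) : Zsp m d :=
  (lam⁻¹ • gradY F z, gradX F z)

/-- `⟨∇F(z), ∇_λG(z)⟩ = ⟨∇_yF(z), ∇_yG(z)⟩/λ + ⟨∇_xF(z), ∇_xG(z)⟩`. -/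
noncomputable def innerLam (lam : ℝ) {m d : ℕ} (F G : Zsp m d → ℝ) (z : Zsp m d) : ℝ :=
  ⟪gradY F z, gradY G z⟫ / lam + ⟪gradX F z, gradX G z⟫


lemma cost_self (lam : ℝ) {m d : ℕ} (z : Zsp m d) : cost lam z z = 0 := by
  simp [cost]

lemma continuous_cost (lam : ℝ) {m d : ℕ} (z : Zsp m d) : Continuous (cost lam z) := by
  unfold cost
  fun_prop

lemma min_div_two_mul_dist_sq_le_cost {lam : ℝ} (hlam : 0 ≤ lam) {m d : ℕ} (z z' : Zsp m d) :
    min lam 1 / 2 * dist z z' ^ 2 ≤ cost lam z z' := by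
  have hy : min lam 1 * ‖z.1 - z'.1‖ ^ 2 ≤ lam * ‖z.1 - z'.1‖ ^ 2 := by
    gcongr
    exact min_le_left lam 1
  have hx : min lam 1 * ‖z.2 - z'.2‖ ^ 2 ≤ ‖z.2 - z'.2‖ ^ 2 :=
    mul_le_of_le_one_left (sq_nonneg _) (min_le_right lam 1)
  have hy₀ : 0 ≤ lam * ‖z.1 - z'.1‖ ^ 2 := by positivity
  have hx₀ : 0 ≤ ‖z.2 - z'.2‖ ^ 2 := by positivity
  rw [Prod.dist_eq, dist_eq_norm, dist_eq_norm, cost]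
  rcases max_choice ‖z.1 - z'.1‖ ‖z.2 - z'.2‖ with h | h <;> rw [h] <;> linarith

/-- The `c`-transform of a potential `φ` for an arbitrary cost `c`, of which `ctrans lam` is the
case `c = cost lam`. As a real infimum it is `0` where `c · y - φ` is unbounded below. -/
def cTransform {X Y : Type*} (c : X → Y → ℝ) (φ : X → ℝ) (y : Y) : ℝ :=
  ⨅ x, (c x y - φ x)

section CTransform

variable {X : Type*} [PseudoMetricSpace X] {c : X → X → ℝ} {a : ℝ} {K : NNReal} {φ ψ : X → ℝ}

lemma neg_sub_le_cost_sub (ha : 0 < a) (hcoer : ∀ x y, a / 2 * dist x y ^ 2 ≤ c x y)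
    (hφ : LipschitzWith K φ) (x y : X) :
    -φ y - K ^ 2 / (2 * a) ≤ c x y - φ x := by
  have hlip : φ x ≤ φ y + K * dist x y := hφ.le_add_mul x y
  have hyoung : K * dist x y ≤ a / 2 * dist x y ^ 2 + K ^ 2 / (2 * a) :=
    calc K * dist x y = 2 * dist x y * K / 2 := by ring
      _ ≤ (a * dist x y ^ 2 + a⁻¹ * K ^ 2) / 2 := by
        gcongr
        exact two_mul_le_add_mul_sq ha
      _ = a / 2 * dist x y ^ 2 + K ^ 2 / (2 * a) := by field_simp
  linarith [hcoer x y]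

lemma bddBelow_range_cost_sub (ha : 0 < a) (hcoer : ∀ x y, a / 2 * dist x y ^ 2 ≤ c x y)
    (hφ : LipschitzWith K φ) (y : X) : BddBelow (Set.range fun x => c x y - φ x) :=
  ⟨_, Set.forall_mem_range.2 fun x => neg_sub_le_cost_sub ha hcoer hφ x y⟩

lemma abs_cTransform_add_le (ha : 0 < a) (hcoer : ∀ x y, a / 2 * dist x y ^ 2 ≤ c x y)
    (hdiag : ∀ x, c x x = 0) (hφ : LipschitzWith K φ) (y : X) :
    |cTransform c φ y + φ y| ≤ K ^ 2 / (2 * a) := by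
  have : Nonempty X := ⟨y⟩
  have hlower : -φ y - K ^ 2 / (2 * a) ≤ cTransform c φ y :=
    le_ciInf fun x => neg_sub_le_cost_sub ha hcoer hφ x y
  have hupper : cTransform c φ y ≤ c y y - φ y :=
    ciInf_le (bddBelow_range_cost_sub ha hcoer hφ y) y
  have hnonneg : 0 ≤ K ^ 2 / (2 * a) := by positivity
  rw [hdiag] at hupper
  rw [abs_le]
  constructor <;> linarith

variable [MeasurableSpace X] {μ : Measure X} [IsFiniteMeasure μ]

lemma hasDerivAt_integral_cTransform_add (ha : 0 < a)
    (hcoer : ∀ x y, a / 2 * dist x y ^ 2 ≤ c x y) (hdiag : ∀ x, c x x = 0)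
    (hψ : LipschitzWith K ψ) :
    HasDerivAt (fun ε : ℝ => ∫ y, (cTransform c (fun x => ε * ψ x) y + ε * ψ y) ∂μ) 0 0 := by
  have hbound : ∀ ε : ℝ, ‖∫ y, (cTransform c (fun x => ε * ψ x) y + ε * ψ y) ∂μ‖
      ≤ K ^ 2 / (2 * a) * μ.real Set.univ * ‖ε ^ 2‖ := fun ε =>
    calc _ ≤ (‖ε‖₊ * K : NNReal) ^ 2 / (2 * a) * μ.real Set.univ :=
          norm_integral_le_of_norm_le_const <| .of_forall <|
            abs_cTransform_add_le ha hcoer hdiag ((lipschitzWith_smul ε).comp hψ)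
      _ = K ^ 2 / (2 * a) * μ.real Set.univ * ‖ε ^ 2‖ := by
        rw [NNReal.coe_mul, coe_nnnorm, norm_pow]
        ring
  have hbigO : (fun ε : ℝ => ∫ y, (cTransform c (fun x => ε * ψ x) y + ε * ψ y) ∂μ)
      =O[nhds 0] fun ε => ‖ε - 0‖ ^ 2 := by
    simpa only [sub_zero, norm_pow] using
      (Asymptotics.IsBigO.of_bound _ (.of_forall hbound)).norm_right
  simpa using (hbigO.hasFDerivAt one_lt_two).hasDerivAt

variable [OpensMeasurableSpace X]

lemma measurable_cTransform (ha : 0 < a) (hcoer : ∀ x y, a / 2 * dist x y ^ 2 ≤ c x y)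
    (husc : ∀ x, UpperSemicontinuous (c x)) (hφ : LipschitzWith K φ) :
    Measurable (cTransform c φ) :=
  (upperSemicontinuous_ciInf (bddBelow_range_cost_sub ha hcoer hφ) fun x =>
    (husc x).add upperSemicontinuous_const).measurable

lemma integrable_cTransform_add (ha : 0 < a) (hcoer : ∀ x y, a / 2 * dist x y ^ 2 ≤ c x y)
    (hdiag : ∀ x, c x x = 0) (husc : ∀ x, UpperSemicontinuous (c x)) (hφ : LipschitzWith K φ) :
    Integrable (fun y => cTransform c φ y + φ y) μ :=
  .of_bound
    ((measurable_cTransform ha hcoer husc hφ).add hφ.continuous.measurable).aestronglyMeasurable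
    _ (.of_forall (abs_cTransform_add_le ha hcoer hdiag hφ))

theorem hasDerivAt_integral_cTransform (ha : 0 < a)
    (hcoer : ∀ x y, a / 2 * dist x y ^ 2 ≤ c x y) (hdiag : ∀ x, c x x = 0)
    (husc : ∀ x, UpperSemicontinuous (c x)) (hψ : LipschitzWith K ψ) (hψμ : Integrable ψ μ) :
    HasDerivAt (fun ε : ℝ => ∫ y, cTransform c (fun x => ε * ψ x) y ∂μ) (-∫ y, ψ y ∂μ) 0 := by
  have hsplit : ∀ ε : ℝ, ∫ y, cTransform c (fun x => ε * ψ x) y ∂μ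
      = ∫ y, (cTransform c (fun x => ε * ψ x) y + ε * ψ y) ∂μ - ε * ∫ y, ψ y ∂μ := fun ε => by
    have hrem : Integrable (fun y => cTransform c (fun x => ε * ψ x) y + ε * ψ y) μ :=
      integrable_cTransform_add ha hcoer hdiag husc ((lipschitzWith_smul ε).comp hψ)
    rw [← integral_const_mul, ← integral_sub hrem (hψμ.const_mul ε)]
    simp only [add_sub_cancel_right]
  simpa only [funext hsplit, zero_sub] using
    (hasDerivAt_integral_cTransform_add ha hcoer hdiag hψ).fun_sub
      (hasDerivAt_mul_const (∫ y, ψ y ∂μ))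

theorem dual_objective_first_variation_general {ρ : Measure X} (ha : 0 < a)
    (hcoer : ∀ x y, a / 2 * dist x y ^ 2 ≤ c x y) (hdiag : ∀ x, c x x = 0)
    (husc : ∀ x, UpperSemicontinuous (c x)) (hψ : LipschitzWith K ψ)
    (_hψρ : Integrable ψ ρ) (hψμ : Integrable ψ μ) :
    HasDerivAt
      (fun ε : ℝ => ∫ x, ε * ψ x ∂ρ + ∫ y, cTransform c (fun x => ε * ψ x) y ∂μ)
      (∫ x, ψ x ∂ρ - ∫ x, ψ x ∂μ) 0 := by
  simpa only [integral_const_mul, sub_eq_add_neg] using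
    (hasDerivAt_mul_const (∫ x, ψ x ∂ρ)).fun_add
      (hasDerivAt_integral_cTransform ha hcoer hdiag husc hψ hψμ)

end CTransform

/-- the first variation of the dual objective
`J(ε) = ∫ εψ dρ + ∫ (εψ)^c dμ` at the zero potential is `ρ − μ`, i.e.
`J'(0) = ∫ ψ dρ − ∫ ψ dμ`. -/
theorem dual_objective_first_variation
    (m d : ℕ) (lam L M B : ℝ) (hlam : 0 < lam)
    (ρ μ : Measure (Zsp m d)) [IsProbabilityMeasure ρ] [IsProbabilityMeasure μ]
    (ψ : Zsp m d → ℝ)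
    (hB : ∀ z, |ψ z| ≤ B)
    (hC2 : ContDiff ℝ 2 ψ)
    (hL : ∀ z, ‖fderiv ℝ ψ z‖ ≤ L)
    (hM : ∀ z, ‖fderiv ℝ (fderiv ℝ ψ) z‖ ≤ M) :
    HasDerivAt
      (fun ε : ℝ => ∫ z, ε * ψ z ∂ρ + ∫ z', ctrans lam (fun z => ε * ψ z) z' ∂μ)
      (∫ z, ψ z ∂ρ - ∫ z, ψ z ∂μ) 0 := by
  have hLip : LipschitzWith L.toNNReal ψ :=
    lipschitzWith_of_nnnorm_fderiv_le (hC2.differentiable two_ne_zero) fun z =>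
      NNReal.le_toNNReal_of_coe_le (hL z)
  have hψ : ∀ ν : Measure (Zsp m d), [IsFiniteMeasure ν] → Integrable ψ ν := fun ν _ =>
    .of_bound hC2.continuous.aestronglyMeasurable B (.of_forall hB)
  exact dual_objective_first_variation_general (lt_min hlam one_pos)
    (min_div_two_mul_dist_sq_le_cost hlam.le) (cost_self lam)
    (fun z => (continuous_cost lam z).upperSemicontinuous) hLip (hψ ρ) (hψ μ)
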